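/- Let n = 2 or n = 3, and let C ⊆ ℝⁿ be an infinite rational curve. If C is invariant under a translation x ↦ x + v with v ≠ 0, then C is a line. -/

import Mathlib

open Polynomial Matrix RealInnerProductSpace

noncomputable section

/-- A rational parametrization of a curve in `ℝⁿ`: components `pᵢ/qᵢ` with `qᵢ ≠ 0` and
`gcd(pᵢ, qᵢ) = 1`. -/
structure RatParam (n : ℕ) where
  p : Fin n → Polynomial ℝ
  q : Fin n → Polynomial ℝ
  q_ne_zero : ∀ i, q i ≠ 0
  coprime : ∀ i, IsCoprime (p i) (q i)

namespace RatParam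

variable {n : ℕ}

/-- The (cofinite) set of parameters where the parametrization is defined. -/
def domain (X : RatParam n) : Set ℝ := {t | ∀ i, (X.q i).eval t ≠ 0}

/-- The value of the parametrization at a parameter `t`. -/
def eval (X : RatParam n) (t : ℝ) : EuclideanSpace ℝ (Fin n) :=
  WithLp.toLp 2 (fun i => (X.p i).eval t / (X.q i).eval t)

/-- The associated rational curve: the image of the parametrization over its domain. -/
def curve (X : RatParam n) : Set (EuclideanSpace ℝ (Fin n)) := X.eval '' X.domain

/-- A parametrization is proper if it is injective outside some finite set of parameters. -/
def Proper (X : RatParam n) : Prop :=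
  ∃ F : Set ℝ, F.Finite ∧ Set.InjOn X.eval (X.domain \ F)

end RatParam

/-- A line in `ℝⁿ`: a one-dimensional affine subspace, as a set. -/
def IsLine {n : ℕ} (S : Set (EuclideanSpace ℝ (Fin n))) : Prop :=
  ∃ (p v : EuclideanSpace ℝ (Fin n)), v ≠ 0 ∧ S = {x | ∃ s : ℝ, x = p + s • v}

/-! Every affine subspace meeting a rational curve in infinitely many points contains it, because
a linear equation along the curve is a polynomial equation in the parameter. A curve invariant
under translation by `v` meets the line through one of its points with direction `v` infinitely
often, so it lies on that line. Its position on the line is a continuous function on the parameter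
domain, which consists of finitely many intervals; so the curve is a union of finitely many
intervals of the line. By the pigeonhole principle one of them contains two distinct translates of
a point by multiples of `v`, and the translates of that interval cover the line. -/

theorem exists_finite_ordConnected_sUnion_eq {α : Type*} [LinearOrder α] {S : Set α}
    (hS : Sᶜ.Finite) :
    ∃ 𝒜 : Set (Set α), 𝒜.Finite ∧ (∀ A ∈ 𝒜, A.OrdConnected) ∧ ⋃₀ 𝒜 = S := by
  -- Points of `S` belong to the same piece when no point of `Sᶜ` separates them.
  refine ⟨(fun B => {t | t ∈ S ∧ Sᶜ ∩ Set.Iio t = B}) '' 𝒫 Sᶜ, hS.powerset.image _, ?_, ?_⟩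
  · rintro _ ⟨B, -, rfl⟩
    refine ⟨fun x ⟨_, hxB⟩ y ⟨hyS, hyB⟩ z ⟨hxz, hzy⟩ => ⟨?_, ?_⟩⟩
    · by_contra hzS
      have hzy' : z < y := hzy.lt_of_ne fun h => hzS (h ▸ hyS)
      have hzB : z ∈ Sᶜ ∩ Set.Iio x := hxB.trans hyB.symm ▸ ⟨hzS, hzy'⟩
      exact hxz.not_gt hzB.2
    · apply Set.Subset.antisymm
      · exact hyB ▸ Set.inter_subset_inter_right _ (Set.Iio_subset_Iio hzy)
      · exact hxB ▸ Set.inter_subset_inter_right _ (Set.Iio_subset_Iio hxz)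
  · ext t
    exact ⟨fun ⟨_, ⟨_, _, rfl⟩, ht⟩ => ht.1,
      fun ht => ⟨_, ⟨_, Set.inter_subset_left, rfl⟩, ht, rfl⟩⟩

theorem sUnion_ordConnected_eq_univ_of_periodic {G : Type*} [AddCommGroup G] [LinearOrder G]
    [IsOrderedAddMonoid G] [Archimedean G] {c : G} (hc : 0 < c) {𝒜 : Set (Set G)}
    (h𝒜 : 𝒜.Finite) (hconn : ∀ A ∈ 𝒜, A.OrdConnected) (hne : (⋃₀ 𝒜).Nonempty)
    (hper : Function.Periodic (· ∈ ⋃₀ 𝒜) c) : ⋃₀ 𝒜 = Set.univ := by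
  obtain ⟨y, hy⟩ := hne
  have hmem (k : ℕ) : ∃ A ∈ 𝒜, y + k • c ∈ A := (hper.nsmul k y).mpr hy
  choose A hA𝒜 hA using hmem
  obtain ⟨j, k, hjk, hAjk⟩ := h𝒜.exists_lt_map_eq_of_forall_mem hA𝒜
  have hIcc : Set.Icc (y + j • c) (y + k • c) ⊆ A j :=
    (hconn _ (hA𝒜 j)).out (hA j) (hAjk ▸ hA k)
  have hstep : y + j • c + c ≤ y + k • c := by
    rw [add_assoc, ← succ_nsmul]
    gcongr
    exact hjk
  refine Set.eq_univ_of_forall fun x => ?_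
  obtain ⟨z, hz, hxz⟩ := hper.exists_mem_Ico hc x (y + j • c)
  exact hxz.mpr ⟨A j, hA𝒜 j, hIcc ⟨hz.1, hz.2.le.trans hstep⟩⟩

theorem image_eq_univ_of_periodic {α G : Type*} [ConditionallyCompleteLinearOrder α]
    [DenselyOrdered α] [TopologicalSpace α] [OrderTopology α] [AddCommGroup G] [LinearOrder G]
    [IsOrderedAddMonoid G] [Archimedean G] [TopologicalSpace G] [OrderClosedTopology G]
    {S : Set α} (hS : Sᶜ.Finite) (hne : S.Nonempty) {f : α → G} (hf : ContinuousOn f S)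
    {c : G} (hc : 0 < c) (hper : Function.Periodic (· ∈ f '' S) c) : f '' S = Set.univ := by
  obtain ⟨𝒜, h𝒜, hconn, rfl⟩ := exists_finite_ordConnected_sUnion_eq hS
  have himage := hne.image f
  rw [Set.image_sUnion] at himage hper ⊢
  refine sUnion_ordConnected_eq_univ_of_periodic hc (h𝒜.image _) ?_ himage hper
  rintro _ ⟨A, hA, rfl⟩
  exact ((hconn A hA).isPreconnected.image f
    (hf.mono (Set.subset_sUnion_of_mem hA))).ordConnected

theorem periodic_mem_of_image_add_right_eq {G : Type*} [AddGroup G] {C : Set G} {v : G}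
    (h : (fun x => x + v) '' C = C) : Function.Periodic (· ∈ C) v := fun x =>
  propext <| by simpa only [h] using (add_left_injective v).mem_set_image (s := C) (a := x)

theorem periodic_mem_image {F G H : Type*} [AddGroup G] [AddGroup H] [FunLike F G H]
    [AddMonoidHomClass F G H] {C : Set G} {v : G} (h : Function.Periodic (· ∈ C) v) (g : F) :
    Function.Periodic (· ∈ g '' C) (g v) := by
  refine fun y => propext ⟨?_, ?_⟩
  · rintro ⟨x, hx, hxy⟩
    exact ⟨x - v, (h.sub_eq x).mpr hx, by rw [map_sub, hxy, add_sub_cancel_right]⟩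
  · rintro ⟨x, hx, rfl⟩
    exact ⟨x + v, (h x).mpr hx, map_add g x v⟩

namespace RatParam

variable {n : ℕ} (X : RatParam n)

theorem finite_compl_domain : X.domainᶜ.Finite := by
  have hroots : X.domainᶜ = ⋃ i, {t | (X.q i).IsRoot t} := by
    ext t
    simp [domain]
  rw [hroots]
  exact Set.finite_iUnion fun i => finite_setOfPred_isRoot (X.q_ne_zero i)

theorem domain_nonempty : X.domain.Nonempty :=
  X.finite_compl_domain.infinite_compl.nonempty.mono (compl_compl X.domain).le

theorem continuousOn_eval : ContinuousOn X.eval X.domain :=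
  (PiLp.continuous_toLp 2 _).comp_continuousOn <| continuousOn_pi.mpr fun i =>
    (X.p i).continuousOn.div (X.q i).continuousOn fun _ ht => ht i

theorem exists_polynomial_isRoot_iff (f : EuclideanSpace ℝ (Fin n) →ₗ[ℝ] ℝ) (c : ℝ) :
    ∃ N : Polynomial ℝ, ∀ t ∈ X.domain, N.IsRoot t ↔ f (X.eval t) = c := by
  let Q := ∏ i, X.q i
  let N := ∑ i, C (f (EuclideanSpace.single i 1)) * X.p i * ∏ j ∈ Finset.univ.erase i, X.q j
  refine ⟨N - C c * Q, fun t ht => ?_⟩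
  have hQ : Q.eval t ≠ 0 := by
    simpa only [Q, eval_prod] using Finset.prod_ne_zero_iff.mpr fun i _ => ht i
  have hN : N.eval t = f (X.eval t) * Q.eval t := by
    have hf : f (X.eval t) = ∑ i, X.eval t i * f (EuclideanSpace.single i 1) := by
      conv_lhs => rw [← (EuclideanSpace.basisFun (Fin n) ℝ).sum_repr (X.eval t)]
      simp
    simp only [hf, N, Q, eval_finsetSum, eval_mul, eval_C, eval_prod, Finset.sum_mul]
    refine Finset.sum_congr rfl fun i hi => ?_
    rw [← Finset.mul_prod_erase _ _ hi]
    have hqi : (X.q i).eval t ≠ 0 := ht i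
    simp only [RatParam.eval]
    field_simp
  rw [IsRoot.def, eval_sub, eval_mul, eval_C, hN, ← sub_mul, mul_eq_zero_iff_right hQ, sub_eq_zero]

theorem apply_eval_eq_of_infinite (f : EuclideanSpace ℝ (Fin n) →ₗ[ℝ] ℝ) {c : ℝ}
    (h : (X.curve ∩ {x | f x = c}).Infinite) {t : ℝ} (ht : t ∈ X.domain) :
    f (X.eval t) = c := by
  obtain ⟨N, hN⟩ := X.exists_polynomial_isRoot_iff f c
  have hinf : (X.domain ∩ X.eval ⁻¹' {x | f x = c}).Infinite :=
    .of_image X.eval (by rwa [Set.image_inter_preimage])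
  have hroots : X.domain ∩ X.eval ⁻¹' {x | f x = c} ⊆ {s | N.IsRoot s} :=
    fun s hs => (hN s hs.1).mpr hs.2
  have hzero : N = 0 := eq_zero_of_infinite_isRoot N (hinf.mono hroots)
  exact (hN t ht).mp (hzero ▸ eval_zero)

theorem curve_subset_of_infinite_inter (S : AffineSubspace ℝ (EuclideanSpace ℝ (Fin n)))
    (h : (X.curve ∩ S).Infinite) : X.curve ⊆ S := by
  obtain ⟨P, -, hP⟩ := h.nonempty
  rintro _ ⟨t, ht, rfl⟩
  by_contra htS
  have hdir : X.eval t - P ∉ S.direction := by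
    rwa [← vsub_eq_sub, S.vsub_right_mem_direction_iff_mem hP]
  obtain ⟨f, hf, hker⟩ := S.direction.exists_le_ker_of_notMem hdir
  have hS : (S : Set (EuclideanSpace ℝ (Fin n))) ⊆ {x | f x = f P} := fun x hx => by
    have hx' : f (x - P) = 0 := hker (S.vsub_mem_direction hx hP)
    rwa [map_sub, sub_eq_zero] at hx'
  refine hf ?_
  rw [map_sub, sub_eq_zero]
  exact X.apply_eval_eq_of_infinite f (h.mono (Set.inter_subset_inter_right _ hS)) ht

variable {X} {v P : EuclideanSpace ℝ (Fin n)}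

theorem exists_eq_add_smul_of_periodic (hper : Function.Periodic (· ∈ X.curve) v) (hv : v ≠ 0)
    (hP : P ∈ X.curve) {x : EuclideanSpace ℝ (Fin n)} (hx : x ∈ X.curve) :
    ∃ s : ℝ, x = P + s • v := by
  have : IsAddTorsionFree (EuclideanSpace ℝ (Fin n)) := .of_isTorsionFree ℝ _
  have hinf : (Set.range fun k : ℕ => P + k • v).Infinite :=
    (infinite_range_add_nsmul_iff P v).mpr hv
  have hsub : (Set.range fun k : ℕ => P + k • v) ⊆
      X.curve ∩ AffineSubspace.mk' P (Submodule.span ℝ {v}) := by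
    rintro _ ⟨k, rfl⟩
    refine ⟨(hper.nsmul k P).mpr hP, ?_⟩
    simpa using nsmul_mem (Submodule.mem_span_singleton_self v) k
  have hxS := X.curve_subset_of_infinite_inter _ (hinf.mono hsub) hx
  obtain ⟨s, hs⟩ := Submodule.mem_span_singleton.mp ((AffineSubspace.mem_mk' ..).mp hxS)
  exact ⟨s, by rw [hs, vsub_eq_sub, add_sub_cancel]⟩

theorem image_curve_eq_univ_of_periodic (hper : Function.Periodic (· ∈ X.curve) v)
    (g : EuclideanSpace ℝ (Fin n) →L[ℝ] ℝ) (hg : 0 < g v) : g '' X.curve = Set.univ := by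
  have hper' := periodic_mem_image hper g
  rw [curve, Set.image_image] at hper' ⊢
  exact image_eq_univ_of_periodic X.finite_compl_domain X.domain_nonempty
    (g.continuous.comp_continuousOn X.continuousOn_eval) hg hper'

end RatParam

theorem statement_9_general {n : ℕ} (X : RatParam n) {v : EuclideanSpace ℝ (Fin n)} (hv : v ≠ 0)
    (htrans : (fun x => x + v) '' X.curve = X.curve) : IsLine X.curve := by
  have hper := periodic_mem_of_image_add_right_eq htrans
  obtain ⟨P, hP⟩ : X.curve.Nonempty := X.domain_nonempty.image X.eval
  obtain ⟨g, hg⟩ := SeparatingDual.exists_eq_one (R := ℝ) hv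
  refine ⟨P, v, hv, Set.Subset.antisymm
    (fun x hx => RatParam.exists_eq_add_smul_of_periodic hper hv hP hx) ?_⟩
  rintro _ ⟨s, rfl⟩
  obtain ⟨x, hx, hgx⟩ : g P + s ∈ g '' X.curve :=
    RatParam.image_curve_eq_univ_of_periodic hper g (hg ▸ one_pos) ▸ Set.mem_univ _
  obtain ⟨r, rfl⟩ := RatParam.exists_eq_add_smul_of_periodic hper hv hP hx
  have hrs : r = s := by simpa [hg] using hgx
  exact hrs ▸ hx

/-- Let `n = 2` or `n = 3`, and let `C ⊆ ℝⁿ` be an infinite rational curve. If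
`C` is invariant under a translation `x ↦ x + v` with `v ≠ 0`, then `C` is a line. -/
theorem statement_9 {n : ℕ} (hn : n = 2 ∨ n = 3) (X : RatParam n)
    (C : Set (EuclideanSpace ℝ (Fin n))) (hC : C = X.curve) (hCinf : C.Infinite)
    (v : EuclideanSpace ℝ (Fin n)) (hv : v ≠ 0)
    (htrans : (fun x => x + v) '' C = C) :
    IsLine C := by
  subst hC
  exact statement_9_general X hv htrans
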